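/- arXiv:1306.4230 — 2 statements merged into one kernel-verified Lean document; each statement's English description precedes it below -/
import Mathlib

section
/- Let R > 0, α > 0, δ > 0 and θ > 0 be real numbers, and set d = α·δ. Then ∫₀^{R^α} (δ/R^d)·y^{δ-1}·(1 - e^{-θ(1+y)}) dy = 1 - (δ·e^{-θ}/(R^d·θ^δ))·γ(δ, R^α·θ). (This is the integral evaluation underlying Proposition 1, the joint fading–path loss CDF F_Z(θ) = 1 - (δ e^{-θ}/(R^d θ^δ))·γ(δ, R^α θ).) -/
open MeasureTheory ProbabilityTheory Real

/-- The lower incomplete gamma function `γ(s, x) = ∫₀ˣ t^(s-1) e^(-t) dt`. -/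
noncomputable def lowerIncompleteGamma (s x : ℝ) : ℝ :=
  ∫ t in (0:ℝ)..x, t ^ (s - 1) * Real.exp (-t)

theorem integral_rpow_mul_exp_neg_mul_eq_lowerIncompleteGamma_div {s b θ : ℝ}
    (hb : 0 ≤ b) (hθ : 0 < θ) :
    ∫ y in (0 : ℝ)..b, y ^ (s - 1) * exp (-(θ * y)) =
      lowerIncompleteGamma s (b * θ) / θ ^ s := by
  have rescale : ∀ y ∈ Set.uIcc 0 b,
      θ * ((θ * y) ^ (s - 1) * exp (-(θ * y))) = θ ^ s * (y ^ (s - 1) * exp (-(θ * y))) := by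
    intro y hy
    rw [Set.uIcc_of_le hb] at hy
    rw [mul_rpow hθ.le hy.1, rpow_sub_one hθ.ne']
    field_simp
  rw [eq_div_iff (rpow_pos_of_pos hθ s).ne', mul_comm]
  calc
    θ ^ s * ∫ y in (0 : ℝ)..b, y ^ (s - 1) * exp (-(θ * y))
    _ = ∫ y in (0 : ℝ)..b, θ * ((θ * y) ^ (s - 1) * exp (-(θ * y))) := by
      rw [intervalIntegral.integral_congr rescale, intervalIntegral.integral_const_mul]
    _ = ∫ t in (θ * 0)..(θ * b), t ^ (s - 1) * exp (-t) := by
      rw [intervalIntegral.integral_const_mul]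
      exact intervalIntegral.mul_integral_comp_mul_left (f := fun t ↦ t ^ (s - 1) * exp (-t)) θ
    _ = lowerIncompleteGamma s (b * θ) := by
      rw [mul_zero, mul_comm θ b, lowerIncompleteGamma]

theorem integral_rpow_sub_one {s : ℝ} (hs : 0 < s) (b : ℝ) :
    ∫ y in (0 : ℝ)..b, y ^ (s - 1) = b ^ s / s := by
  rw [integral_rpow (Or.inl (by linarith)), sub_add_cancel, zero_rpow hs.ne', sub_zero]

theorem stmt_0_general {b s θ : ℝ} (c : ℝ) (hb : 0 < b) (hs : 0 < s) (hθ : 0 < θ) :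
    ∫ y in (0 : ℝ)..b, (s / b ^ s) * y ^ (s - 1) * (1 - c * exp (-(θ * y))) =
      1 - (s * c / (b ^ s * θ ^ s)) * lowerIncompleteGamma s (b * θ) := by
  have power_integrable : IntervalIntegrable (fun y : ℝ ↦ y ^ (s - 1)) volume 0 b :=
    intervalIntegral.intervalIntegrable_rpow' (by linarith)
  have damped_integrable :
      IntervalIntegrable (fun y : ℝ ↦ y ^ (s - 1) * exp (-(θ * y))) volume 0 b :=
    power_integrable.mul_continuousOn (by fun_prop)
  have hbs : b ^ s ≠ 0 := (rpow_pos_of_pos hb s).ne'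
  calc
    ∫ y in (0 : ℝ)..b, (s / b ^ s) * y ^ (s - 1) * (1 - c * exp (-(θ * y)))
    _ = ∫ y in (0 : ℝ)..b, (s / b ^ s) *
          (y ^ (s - 1) - c * (y ^ (s - 1) * exp (-(θ * y)))) := by
      congr with y
      ring
    _ = (s / b ^ s) * ((∫ y in (0 : ℝ)..b, y ^ (s - 1)) -
          c * ∫ y in (0 : ℝ)..b, y ^ (s - 1) * exp (-(θ * y))) := by
      rw [intervalIntegral.integral_const_mul,
        intervalIntegral.integral_sub power_integrable (damped_integrable.const_mul c),
        intervalIntegral.integral_const_mul]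
    _ = (s / b ^ s) * (b ^ s / s - c * (lowerIncompleteGamma s (b * θ) / θ ^ s)) := by
      rw [integral_rpow_sub_one hs,
        integral_rpow_mul_exp_neg_mul_eq_lowerIncompleteGamma_div hb.le hθ]
    _ = 1 - (s * c / (b ^ s * θ ^ s)) * lowerIncompleteGamma s (b * θ) := by
      field_simp

/-- The integral evaluation underlying Proposition 1 (joint fading–path loss CDF):
`∫₀^{R^α} (δ/R^d) y^{δ-1} (1 - e^{-θ(1+y)}) dy = 1 - (δ e^{-θ}/(R^d θ^δ)) γ(δ, R^α θ)`. -/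
theorem stmt_0 (R α δ θ d : ℝ) (hR : 0 < R) (hα : 0 < α) (hδ : 0 < δ) (hθ : 0 < θ)
    (hd : d = α * δ) :
    ∫ y in (0:ℝ)..(R ^ α),
        (δ / R ^ d) * y ^ (δ - 1) * (1 - Real.exp (-(θ * (1 + y)))) =
      1 - (δ * Real.exp (-θ) / (R ^ d * θ ^ δ)) * lowerIncompleteGamma δ (R ^ α * θ) := by
  simpa only [hd, rpow_mul hR.le, mul_add, mul_one, neg_add, exp_add] using
    stmt_0_general (exp (-θ)) (rpow_pos_of_pos hR α) hδ hθ
end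

section
/- Let T ≥ 1 be a natural number and let B > 0 and θ > 0 be real numbers. Then (T·e^{−θ}/B^T) · ∫₀^{B} (B − y)^{T−1}·e^{−θy} dy = e^{−θ}·T! · ( ∑_{i=0}^{T−1} (−1)^i / ((θB)^{i+1}·(T−1−i)!) − (−1)^{T−1}·e^{−θB}/(θB)^T ). (The integral evaluation establishing Proposition 2, with B = R^d.) -/
open MeasureTheory Real

open scoped Nat

/-!
If `D p` is the sum of all iterated derivatives of a polynomial `p`, then `-exp (-z) * D p z` is an
antiderivative of `exp (-z) * p z`. For `p = (X - s) ^ n`, integrating along the segment from `0`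
to `s` evaluates `∫ x in 0..1, (1 - x) ^ n * exp (-(s * x))`: the endpoint `0` contributes the sum,
while at `s` only the `n`-th derivative `n !` survives. The substitution `y = B * x` gives the
integral over `[0, B]`, with `s = θ * B`.
-/

section SumIDeriv

open Polynomial

variable {R : Type*} [CommRing R]

lemma eval_sumIDeriv_X_sub_C_pow (n : ℕ) (a r : R) :
    (sumIDeriv ((X - C a) ^ n)).eval r =
      ∑ i ∈ Finset.range (n + 1), n.descFactorial i * (r - a) ^ (n - i) := by
  have hdeg : ((X - C a) ^ n).natDegree ≤ n :=
    (natDegree_pow_le_of_le n (natDegree_X_sub_C_le a)).trans_eq (mul_one n)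
  simp [sumIDeriv_apply_of_le hdeg, eval_finsetSum, iterate_derivative_X_sub_pow]

lemma eval_sumIDeriv_X_sub_C_pow_self (n : ℕ) (a : R) :
    (sumIDeriv ((X - C a) ^ n)).eval a = n ! := by
  rw [eval_sumIDeriv_X_sub_C_pow, Finset.sum_range_succ, Finset.sum_eq_zero]
  · simp [Nat.descFactorial_self]
  · intro i hi
    rw [sub_self, zero_pow (Nat.sub_ne_zero_of_lt (Finset.mem_range.mp hi)), mul_zero]

end SumIDeriv

lemma descFactorial_mul_neg_pow_div {K : Type*} [Field K] [CharZero K] {n i : ℕ} (hi : i ≤ n)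
    {s : K} (hs : s ≠ 0) :
    n.descFactorial i * (-s) ^ (n - i) / (s * (-s) ^ n) =
      n ! * ((-1) ^ i / (s ^ (i + 1) * (n - i)!)) := by
  obtain ⟨k, rfl⟩ := Nat.exists_eq_add_of_le hi
  have hk : (k ! : K) ≠ 0 := mod_cast k.factorial_ne_zero
  have hfac : ((i + k)! : K) = k ! * (i + k).descFactorial i := by
    have h := Nat.factorial_mul_descFactorial hi
    rw [Nat.add_sub_cancel_left] at h
    exact_mod_cast h.symm
  have hsk : (-s) ^ k ≠ 0 := pow_ne_zero k (neg_ne_zero.mpr hs)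
  have hsign : ((-s) ^ i)⁻¹ = (-1) ^ i * (s ^ i)⁻¹ := by
    rw [neg_pow, mul_inv, ← inv_pow, inv_neg_one]
  rw [Nat.add_sub_cancel_left]
  calc (i + k).descFactorial i * (-s) ^ k / (s * (-s) ^ (i + k))
      = (i + k).descFactorial i * ((-s) ^ i)⁻¹ / s := by rw [pow_add]; field_simp
    _ = (i + k)! * ((-1) ^ i / (s ^ (i + 1) * k !)) := by rw [hsign, hfac, pow_succ]; field_simp

theorem mul_neg_pow_mul_integral_one_sub_pow_mul_cexp_neg (n : ℕ) (s : ℂ) :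
    s * (-s) ^ n * ∫ x in (0 : ℝ)..1, (1 - x : ℂ) ^ n * Complex.exp (-(s * x)) =
      (∑ i ∈ Finset.range (n + 1), n.descFactorial i * (-s) ^ (n - i)) -
        Complex.exp (-s) * n ! := by
  have hint := LindemannWeierstrass.integral_exp_mul_eval ((Polynomial.X - Polynomial.C s) ^ n) s
  rw [eval_sumIDeriv_X_sub_C_pow_self, eval_sumIDeriv_X_sub_C_pow, zero_sub,
    neg_add_eq_sub] at hint
  rw [← hint, mul_assoc, ← intervalIntegral.integral_const_mul]
  congr 2 with x
  have hfactor : (x * s - s) ^ n = (-s) ^ n * (1 - x) ^ n := by rw [← mul_pow]; ring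
  simp only [Polynomial.eval_pow, Polynomial.eval_sub, Polynomial.eval_X, Polynomial.eval_C,
    Complex.real_smul, hfactor]
  ring_nf

theorem integral_one_sub_pow_mul_cexp_neg (n : ℕ) {s : ℂ} (hs : s ≠ 0) :
    ∫ x in (0 : ℝ)..1, (1 - x : ℂ) ^ n * Complex.exp (-(s * x)) =
      n ! * ((∑ i ∈ Finset.range (n + 1), (-1) ^ i / (s ^ (i + 1) * (n - i)!)) -
        (-1) ^ n * Complex.exp (-s) / s ^ (n + 1)) := by
  have hsn : s * (-s) ^ n ≠ 0 := mul_ne_zero hs (pow_ne_zero n (neg_ne_zero.mpr hs))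
  have hend : Complex.exp (-s) * n ! / (s * (-s) ^ n) =
      n ! * ((-1) ^ n * Complex.exp (-s) / s ^ (n + 1)) := by
    have h := descFactorial_mul_neg_pow_div le_rfl hs (n := n)
    simp only [Nat.descFactorial_self, Nat.sub_self, pow_zero, mul_one, Nat.factorial_zero,
      Nat.cast_one] at h
    rw [mul_div_assoc, h]
    ring
  rw [eq_div_of_mul_eq hsn ((mul_comm _ _).trans
    (mul_neg_pow_mul_integral_one_sub_pow_mul_cexp_neg n s)), sub_div, hend, Finset.sum_div,
    mul_sub, Finset.mul_sum]
  congr 1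
  exact Finset.sum_congr rfl fun i hi ↦
    descFactorial_mul_neg_pow_div (Finset.mem_range_succ_iff.mp hi) hs

lemma integral_sub_pow_smul_eq_pow_smul_integral {E : Type*} [NormedAddCommGroup E]
    [NormedSpace ℝ E] (n : ℕ) (b : ℝ) (f : ℝ → E) :
    ∫ y in 0..b, (b - y) ^ n • f y =
      b ^ (n + 1) • ∫ x in (0 : ℝ)..1, (1 - x) ^ n • f (b * x) := by
  have h := intervalIntegral.smul_integral_comp_mul_left (a := 0) (b := 1)
    (fun y ↦ (b - y) ^ n • f y) b
  rw [mul_zero, mul_one] at h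
  rw [← h, pow_succ', mul_smul, ← intervalIntegral.integral_smul (b ^ n)]
  congr 2 with x
  rw [smul_smul, ← mul_pow, mul_sub, mul_one]

theorem integral_sub_pow_mul_cexp_neg (n : ℕ) {B : ℝ} (hB : B ≠ 0) {θ : ℂ} (hθ : θ ≠ 0) :
    ∫ y in 0..B, (B - y : ℂ) ^ n * Complex.exp (-(θ * y)) =
      B ^ (n + 1) * (n ! *
        ((∑ i ∈ Finset.range (n + 1), (-1) ^ i / ((θ * B) ^ (i + 1) * (n - i)!)) -
          (-1) ^ n * Complex.exp (-(θ * B)) / (θ * B) ^ (n + 1))) := by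
  have hθB : θ * B ≠ 0 := mul_ne_zero hθ (Complex.ofReal_ne_zero.mpr hB)
  rw [← integral_one_sub_pow_mul_cexp_neg n hθB]
  simpa [mul_assoc] using
    integral_sub_pow_smul_eq_pow_smul_integral n B fun y ↦ Complex.exp (-(θ * y))

theorem stmt_11_general (T : ℕ) (hT : 1 ≤ T) (B : ℝ) (θ : ℂ) (hB : B ≠ 0) (hθ : θ ≠ 0) :
    (T * Complex.exp (-θ) / B ^ T) *
        ∫ y in 0..B, (B - y : ℂ) ^ (T - 1) * Complex.exp (-(θ * y)) =
      Complex.exp (-θ) * T ! *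
        ((∑ i ∈ Finset.range T, (-1) ^ i / ((θ * B) ^ (i + 1) * (T - 1 - i)!)) -
          (-1) ^ (T - 1) * Complex.exp (-(θ * B)) / (θ * B) ^ T) := by
  have hBT : (B : ℂ) ^ T ≠ 0 := pow_ne_zero T (Complex.ofReal_ne_zero.mpr hB)
  have hfac : (T ! : ℂ) = T * (T - 1)! := mod_cast (Nat.mul_factorial_pred (by lia)).symm
  rw [integral_sub_pow_mul_cexp_neg (T - 1) hB hθ, Nat.sub_add_cancel hT, hfac, ← mul_assoc,
    div_mul_cancel₀ _ hBT]
  ring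

/-- The integral evaluation establishing Proposition 2 (with `B = R^d`):
`(T e^{-θ}/B^T) ∫₀^B (B-y)^{T-1} e^{-θy} dy
  = e^{-θ} T! (∑_{i=0}^{T-1} (-1)^i/((θB)^{i+1} (T-1-i)!) - (-1)^{T-1} e^{-θB}/(θB)^T)`. -/
theorem stmt_11 (T : ℕ) (hT : 1 ≤ T) (B θ : ℝ) (hB : 0 < B) (hθ : 0 < θ) :
    ((T : ℝ) * Real.exp (-θ) / B ^ T) *
        ∫ y in (0:ℝ)..B, (B - y) ^ (T - 1) * Real.exp (-(θ * y)) =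
      Real.exp (-θ) * (T.factorial : ℝ) *
        ((∑ i ∈ Finset.range T,
            (-1 : ℝ) ^ i / ((θ * B) ^ (i + 1) * ((T - 1 - i).factorial : ℝ))) -
          (-1 : ℝ) ^ (T - 1) * Real.exp (-(θ * B)) / (θ * B) ^ T) := by
  have h := stmt_11_general T hT B θ hB.ne' (Complex.ofReal_ne_zero.mpr hθ.ne')
  norm_cast at h
  rw [intervalIntegral.integral_ofReal] at h
  exact_mod_cast h
end
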